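/- Let v : ℝ → ℝ → ℝ be a smooth function of (x,t) with v_x(x,t) > 0 for all (x,t), satisfying the potential Calogero-Degasperis-Ibragimov-Shabat equation v_t = v_{xxx} - (3/4)·v_{xx}²/v_x + 3v_xv_{xx} + v_x³. Then u := v_x^{1/2} satisfies the Calogero-Degasperis-Ibragimov-Shabat equation u_t = u_{xxx} + 3u²u_{xx} + 9uu_x² + 3u⁴u_x. -/

import Mathlib

/-- Total `x`-derivative of a function of `(x, t)`. -/
noncomputable def dx (f : ℝ → ℝ → ℝ) : ℝ → ℝ → ℝ := fun x t => deriv (fun y => f y t) x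

/-- Total `t`-derivative of a function of `(x, t)`. -/
noncomputable def dt (f : ℝ → ℝ → ℝ) : ℝ → ℝ → ℝ := fun x t => deriv (fun s => f x s) t

/-- The potential Calogero-Degasperis-Ibragimov-Shabat equation. -/
def PotCDIS (v : ℝ → ℝ → ℝ) : Prop :=
  ∀ x t, dt v x t =
    dx (dx (dx v)) x t - (3/4) * (dx (dx v) x t)^2 / dx v x t
    + 3 * dx v x t * dx (dx v) x t + (dx v x t)^3

/-- The Calogero-Degasperis-Ibragimov-Shabat equation. -/
def CDIS (u : ℝ → ℝ → ℝ) : Prop :=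
  ∀ x t, dt u x t =
    dx (dx (dx u)) x t + 3 * (u x t)^2 * dx (dx u) x t
    + 9 * u x t * (dx u x t)^2 + 3 * (u x t)^4 * dx u x t

/-!
After multiplication by the integrating factor `2u`, the CDIS equation is the conservation law
`(u²)_t = F_x` with flux `F = 2uu_xx - u_x² + 6u³u_x + u⁶`. If `v_x = u²`, then
`v_xx² / v_x = 4u_x²`, so the potential equation says exactly `v_t = F`. Differentiating this in `x`
and commuting the partial derivatives of `v` gives the conservation law.
-/

open Function

section PartialDerivatives

variable {f : ℝ → ℝ → ℝ} {x t : ℝ}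

lemma hasDerivAt_fst_of_differentiableAt (hf : DifferentiableAt ℝ (uncurry f) (x, t)) :
    HasDerivAt (fun y => f y t) (fderiv ℝ (uncurry f) (x, t) (1, 0)) x :=
  HasFDerivAt.comp_hasDerivAt (f := fun y => (y, t)) x hf.hasFDerivAt
    ((hasDerivAt_id x).prodMk (hasDerivAt_const x t))

lemma hasDerivAt_snd_of_differentiableAt (hf : DifferentiableAt ℝ (uncurry f) (x, t)) :
    HasDerivAt (fun s => f x s) (fderiv ℝ (uncurry f) (x, t) (0, 1)) t :=
  HasFDerivAt.comp_hasDerivAt (f := fun s => (x, s)) t hf.hasFDerivAt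
    ((hasDerivAt_const t x).prodMk (hasDerivAt_id t))

lemma hasDerivAt_dx (hf : DifferentiableAt ℝ (uncurry f) (x, t)) :
    HasDerivAt (fun y => f y t) (dx f x t) x :=
  (hasDerivAt_fst_of_differentiableAt hf).differentiableAt.hasDerivAt

lemma hasDerivAt_dt (hf : DifferentiableAt ℝ (uncurry f) (x, t)) :
    HasDerivAt (fun s => f x s) (dt f x t) t :=
  (hasDerivAt_snd_of_differentiableAt hf).differentiableAt.hasDerivAt

lemma uncurry_dx (hf : Differentiable ℝ (uncurry f)) :
    uncurry (dx f) = fun p => fderiv ℝ (uncurry f) p (1, 0) :=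
  funext fun p => (hasDerivAt_fst_of_differentiableAt (hf p)).deriv

lemma uncurry_dt (hf : Differentiable ℝ (uncurry f)) :
    uncurry (dt f) = fun p => fderiv ℝ (uncurry f) p (0, 1) :=
  funext fun p => (hasDerivAt_snd_of_differentiableAt (hf p)).deriv

lemma contDiff_dx {m n : WithTop ℕ∞} (hf : ContDiff ℝ n (uncurry f)) (hmn : m + 1 ≤ n) :
    ContDiff ℝ m (uncurry (dx f)) := by
  have hn : n ≠ 0 := (one_pos.trans_le (le_add_self.trans hmn)).ne'
  rw [uncurry_dx (hf.differentiable hn)]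
  exact (hf.fderiv_right hmn).clm_apply contDiff_const

lemma contDiff_dt {m n : WithTop ℕ∞} (hf : ContDiff ℝ n (uncurry f)) (hmn : m + 1 ≤ n) :
    ContDiff ℝ m (uncurry (dt f)) := by
  have hn : n ≠ 0 := (one_pos.trans_le (le_add_self.trans hmn)).ne'
  rw [uncurry_dt (hf.differentiable hn)]
  exact (hf.fderiv_right hmn).clm_apply contDiff_const

lemma dt_dx_eq_dx_dt (hf : ContDiff ℝ 2 (uncurry f)) : dt (dx f) = dx (dt f) := by
  have hf' : Differentiable ℝ (uncurry f) := hf.differentiable two_ne_zero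
  have hdf : Differentiable ℝ (fderiv ℝ (uncurry f)) :=
    (hf.fderiv_right one_add_one_eq_two.le).differentiable one_ne_zero
  have hdx : Differentiable ℝ (uncurry (dx f)) :=
    (contDiff_dx hf one_add_one_eq_two.le).differentiable one_ne_zero
  have hdt : Differentiable ℝ (uncurry (dt f)) :=
    (contDiff_dt hf one_add_one_eq_two.le).differentiable one_ne_zero
  have hsymm (p : ℝ × ℝ) : IsSymmSndFDerivAt ℝ (uncurry f) p :=
    hf.contDiffAt.isSymmSndFDerivAt (by simp)
  have apply_const (p e e' : ℝ × ℝ) :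
      fderiv ℝ (fun q => fderiv ℝ (uncurry f) q e) p e' =
        fderiv ℝ (fderiv ℝ (uncurry f)) p e' e := by
    simp [fderiv_clm_apply (hdf p) (differentiableAt_const e)]
  apply uncurry_injective
  rw [uncurry_dt hdx, uncurry_dx hdt, uncurry_dx hf', uncurry_dt hf']
  funext p
  rw [apply_const, apply_const, (hsymm p).eq]

end PartialDerivatives

section ConservationLaw

/-- The flux `F` of the CDIS conservation law `(u²)_t = F_x`, which is the CDIS equation multiplied
by the integrating factor `2u`. -/
noncomputable def cdisFlux (u : ℝ → ℝ → ℝ) : ℝ → ℝ → ℝ := fun x t =>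
  2 * u x t * dx (dx u) x t - dx u x t ^ 2 + 6 * u x t ^ 3 * dx u x t + u x t ^ 6

variable {u v : ℝ → ℝ → ℝ}

lemma dx_sq (hu : Differentiable ℝ (uncurry u)) : dx (u ^ 2) = 2 * u * dx u := by
  funext x t
  exact ((hasDerivAt_dx (hu (x, t))).pow 2).deriv.trans (by simp)

lemma dt_sq (hu : Differentiable ℝ (uncurry u)) : dt (u ^ 2) = 2 * u * dt u := by
  funext x t
  exact ((hasDerivAt_dt (hu (x, t))).pow 2).deriv.trans (by simp)

lemma dx_dx_sq (hu : ContDiff ℝ 2 (uncurry u)) :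
    dx (dx (u ^ 2)) = 2 * dx u ^ 2 + 2 * u * dx (dx u) := by
  have hdx : ContDiff ℝ 1 (uncurry (dx u)) := contDiff_dx hu one_add_one_eq_two.le
  rw [dx_sq (hu.differentiable two_ne_zero)]
  funext x t
  have h₀ := hasDerivAt_dx (hu.differentiable two_ne_zero (x, t))
  have h₁ := hasDerivAt_dx (hdx.differentiable one_ne_zero (x, t))
  exact ((h₀.const_mul 2).mul h₁).deriv.trans (by simp [sq, mul_assoc])

lemma dx_cdisFlux (hu : ContDiff ℝ 3 (uncurry u)) (x t : ℝ) :
    dx (cdisFlux u) x t = 2 * u x t * (dx (dx (dx u)) x t + 3 * u x t ^ 2 * dx (dx u) x t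
      + 9 * u x t * dx u x t ^ 2 + 3 * u x t ^ 4 * dx u x t) := by
  have hdx : ContDiff ℝ 2 (uncurry (dx u)) := contDiff_dx hu two_add_one_eq_three.le
  have hdxx : ContDiff ℝ 1 (uncurry (dx (dx u))) := contDiff_dx hdx one_add_one_eq_two.le
  have h₀ := hasDerivAt_dx (hu.differentiable three_ne_zero (x, t))
  have h₁ := hasDerivAt_dx (hdx.differentiable two_ne_zero (x, t))
  have h₂ := hasDerivAt_dx (hdxx.differentiable one_ne_zero (x, t))
  have hflux := ((((h₀.const_mul 2).mul h₂).sub (h₁.pow 2)).add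
    (((h₀.pow 3).const_mul 6).mul h₁)).add (h₀.pow 6)
  refine hflux.deriv.trans ?_
  simp only [Pi.pow_apply, Nat.cast_ofNat]
  ring

lemma cdis_iff_dt_sq_eq_dx_cdisFlux (hu : ContDiff ℝ 3 (uncurry u)) (hu₀ : ∀ x t, u x t ≠ 0) :
    CDIS u ↔ dt (u ^ 2) = dx (cdisFlux u) := by
  simp only [CDIS, funext_iff, dx_cdisFlux hu, dt_sq (hu.differentiable three_ne_zero)]
  refine forall₂_congr fun x t => ?_
  exact (mul_right_inj' (mul_ne_zero two_ne_zero (hu₀ x t))).symm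

lemma potCDIS_iff_dt_eq_cdisFlux (hu : ContDiff ℝ 2 (uncurry u)) (hu₀ : ∀ x t, u x t ≠ 0)
    (hvx : dx v = u ^ 2) : PotCDIS v ↔ dt v = cdisFlux u := by
  simp only [PotCDIS, funext_iff, hvx]
  rw [dx_dx_sq hu, dx_sq (hu.differentiable two_ne_zero)]
  refine forall₂_congr fun x t => Eq.congr_right ?_
  have hne : u x t ≠ 0 := hu₀ x t
  simp only [cdisFlux, Pi.add_apply, Pi.mul_apply, Pi.pow_apply, Pi.ofNat_apply]
  field_simp
  ring

theorem PotCDIS.cdis_of_dx_eq_sq (hv : ContDiff ℝ 2 (uncurry v)) (hu : ContDiff ℝ 3 (uncurry u))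
    (hu₀ : ∀ x t, u x t ≠ 0) (hvx : dx v = u ^ 2) (h : PotCDIS v) : CDIS u := by
  have hvt : dt v = cdisFlux u :=
    (potCDIS_iff_dt_eq_cdisFlux (hu.of_le (by norm_num)) hu₀ hvx).1 h
  refine (cdis_iff_dt_sq_eq_dx_cdisFlux hu hu₀).2 ?_
  calc dt (u ^ 2) = dt (dx v) := by rw [hvx]
    _ = dx (dt v) := dt_dx_eq_dx_dt hv
    _ = dx (cdisFlux u) := by rw [hvt]

end ConservationLaw

theorem potential_cdis_to_cdis_general
    (v : ℝ → ℝ → ℝ)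
    (hv : ContDiff ℝ 4 (uncurry v))
    (hvx : ∀ x t, 0 < dx v x t)
    (heq : PotCDIS v) :
    CDIS (fun x t => (dx v x t) ^ ((1/2) : ℝ)) := by
  have hdx : ContDiff ℝ 3 (uncurry (dx v)) := contDiff_dx hv three_add_one_eq_four.le
  refine heq.cdis_of_dx_eq_sq (hv.of_le (by norm_num)) ?_ ?_ ?_
  · exact hdx.rpow_const_of_ne fun p => (hvx p.1 p.2).ne'
  · exact fun x t => (Real.rpow_pos_of_pos (hvx x t) _).ne'
  · funext x t
    simp only [Pi.pow_apply, ← Real.sqrt_eq_rpow, Real.sq_sqrt (hvx x t).le]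

/-- If `v` solves the potential CDIS equation with `v_x > 0`, then `u = v_x^{1/2}`
solves the CDIS equation. -/
theorem potential_cdis_to_cdis
    (v : ℝ → ℝ → ℝ)
    (hv : ContDiff ℝ (⊤ : ℕ∞) (fun p : ℝ × ℝ => v p.1 p.2))
    (hvx : ∀ x t, 0 < dx v x t)
    (heq : PotCDIS v) :
    CDIS (fun x t => (dx v x t) ^ ((1/2) : ℝ)) :=
  potential_cdis_to_cdis_general v (hv.of_le (WithTop.coe_le_coe.2 le_top)) hvx heq
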